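/- arXiv:1007.3807 — 2 statements merged into one kernel-verified Lean document; each statement's English description precedes it below -/
import Mathlib

section
/- Let N be a subspace of K^V and define λ_N(U) = (dim N − dim(N×(V∖U)) − dim(N×U))/2 for U ⊆ V. Then λ_N is submodular: λ_N(X) + λ_N(Y) ≥ λ_N(X∪Y) + λ_N(X∩Y) for all X, Y ⊆ V. -/
variable {F : Type*} [Field F] {V : Type*} [Fintype V] [DecidableEq V]

/-- Restriction of chains to a subset `X` of the ground set. -/
def res (F K : Type*) [Semiring F] [AddCommMonoid K] [Module F K]
    {V : Type*} (X : Finset V) : (V → K) →ₗ[F] ({x // x ∈ X} → K) :=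
  LinearMap.funLeft F K Subtype.val

/-- Chains vanishing outside `X`. -/
def vanish (F : Type*) [Semiring F] {K : Type*} [AddCommMonoid K] [Module F K]
    {V : Type*} (X : Finset V) : Submodule F (V → K) where
  carrier := {f | ∀ v ∉ X, f v = 0}
  add_mem' := by
    intro a b ha hb v hv
    simp only [Pi.add_apply, ha v hv, hb v hv, add_zero]
  zero_mem' := by intro v hv; rfl
  smul_mem' := by
    intro c a ha v hv
    simp only [Pi.smul_apply, ha v hv, smul_zero]

/-- `N×X`, the restriction to `X` of the chains in `N` vanishing outside `X`. -/
def timesTo {K : Type*} [AddCommGroup K] [Module F K]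
    (N : Submodule F (V → K)) (X : Finset V) : Submodule F ({x // x ∈ X} → K) :=
  (N ⊓ vanish F X).map (res F K X)


/-- The connectivity function
`λ_N(U) = (dim N − dim(N×(V∖U)) − dim(N×U)) / 2` of a chain-group `N`,
as a rational number. -/
noncomputable def lam {W : Type*} [Fintype W] [DecidableEq W]
    {K : Type*} [AddCommGroup K] [Module F K]
    (N : Submodule F (W → K)) (U : Finset W) : ℚ :=
  ((Module.finrank F N : ℚ) - (Module.finrank F (timesTo N Uᶜ) : ℚ)
    - (Module.finrank F (timesTo N U) : ℚ)) / 2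

/-!
Restriction to `U` is injective on the chains vanishing outside `U`, so `dim (N×U)` is the dimension
of the subspace of those chains in `N`. For `N×X` and `N×Y` these subspaces meet in the one for
`N×(X ∩ Y)`, and their sum lies in the one for `N×(X ∪ Y)`; hence `U ↦ dim (N×U)` is supermodular.
By De Morgan the same holds for `U ↦ dim (N×(V∖U))`, and both enter `λ_N` with a negative sign.
-/

theorem finrank_map_of_injOn {R M M' : Type*} [Semiring R] [AddCommMonoid M] [Module R M]
    [AddCommMonoid M'] [Module R M'] {f : M →ₗ[R] M'} {p : Submodule R M} (hf : Set.InjOn f p) :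
    Module.finrank R (p.map f) = Module.finrank R p := by
  rw [← LinearMap.range_domRestrict]
  exact LinearMap.finrank_range_of_inj hf.injective

section vanish

variable {R K W : Type*} [Semiring R] [AddCommMonoid K] [Module R K]

theorem mem_vanish_iff_support_subset {X : Finset W} {f : W → K} :
    f ∈ vanish R X ↔ Function.support f ⊆ X :=
  Function.support_subset_iff'.symm

theorem vanish_mono : Monotone (vanish R : Finset W → Submodule R (W → K)) := by
  intro X Y hXY f hf
  rw [mem_vanish_iff_support_subset] at hf ⊢
  exact hf.trans (Finset.coe_subset.2 hXY)

theorem vanish_inter [DecidableEq W] (X Y : Finset W) :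
    (vanish R (X ∩ Y) : Submodule R (W → K)) = vanish R X ⊓ vanish R Y := by
  ext f
  simp only [Submodule.mem_inf, mem_vanish_iff_support_subset, Finset.coe_inter,
    Set.subset_inter_iff]

theorem res_injOn_vanish (X : Finset W) :
    Set.InjOn (res R K X) (vanish R X : Submodule R (W → K)) := by
  intro f hf g hg hfg
  ext v
  by_cases hv : v ∈ X
  · exact congrFun hfg ⟨v, hv⟩
  · exact (hf v hv).trans (hg v hv).symm

end vanish

section timesTo

variable {K W : Type*} [AddCommGroup K] [Module F K]

theorem finrank_timesTo (N : Submodule F (W → K)) (X : Finset W) :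
    Module.finrank F (timesTo N X) = Module.finrank F ↥(N ⊓ vanish F X) :=
  finrank_map_of_injOn ((res_injOn_vanish X).mono inf_le_right)

theorem finrank_timesTo_supermodular [DecidableEq W] (N : Submodule F (W → K))
    [FiniteDimensional F N] (X Y : Finset W) :
    Module.finrank F (timesTo N X) + Module.finrank F (timesTo N Y) ≤
      Module.finrank F (timesTo N (X ∪ Y)) + Module.finrank F (timesTo N (X ∩ Y)) := by
  have inf_eq : (N ⊓ vanish F X) ⊓ (N ⊓ vanish F Y) = N ⊓ vanish F (X ∩ Y) := by
    rw [vanish_inter, ← inf_inf_distrib_left]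
  have sup_le_union : (N ⊓ vanish F X) ⊔ (N ⊓ vanish F Y) ≤ N ⊓ vanish F (X ∪ Y) :=
    sup_le (inf_le_inf_left N (vanish_mono Finset.subset_union_left))
      (inf_le_inf_left N (vanish_mono Finset.subset_union_right))
  simp only [finrank_timesTo]
  rw [← Submodule.finrank_sup_add_finrank_inf_eq, inf_eq]
  gcongr
  exact Submodule.finrank_mono sup_le_union

end timesTo

theorem lam_submodular_general {K : Type*} [AddCommGroup K] [Module F K]
    (N : Submodule F (V → K)) [FiniteDimensional F N] (X Y : Finset V) :
    lam N (X ∪ Y) + lam N (X ∩ Y) ≤ lam N X + lam N Y := by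
  have super := finrank_timesTo_supermodular N X Y
  have super_compl := finrank_timesTo_supermodular N Xᶜ Yᶜ
  rw [← Finset.compl_inter, ← Finset.compl_union] at super_compl
  qify at super super_compl
  unfold lam
  linarith

/-- The connectivity function `λ_N` is submodular. -/
theorem lam_submodular {K : Type*} [AddCommGroup K] [Module F K]
    [FiniteDimensional F K] (N : Submodule F (V → K)) (X Y : Finset V) :
    lam N (X ∪ Y) + lam N (X ∩ Y) ≤ lam N X + lam N Y :=
  lam_submodular_general N X Y
end

section
/- If N is a totally isotropic subspace of K^V (K = F²) and M is obtained from N by any sequence of deletions and contractions yielding a chain-group on V' ⊆ V, then |V'| − dim M ≤ |V| − dim N. Consequently, every minor of a Lagrangian chain-group is Lagrangian. -/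
variable {F : Type*} [Field F] {V : Type*} [Fintype V] [DecidableEq V]

def bplusL (F : Type*) [Field F] : (F × F) →ₗ[F] (F × F) →ₗ[F] F :=
  LinearMap.mk₂ F (fun x y => x.1 * y.2 + x.2 * y.1)
    (by intros; simp [Prod.fst_add, Prod.snd_add]; ring)
    (by intros; simp [Prod.smul_fst, Prod.smul_snd, smul_eq_mul]; ring)
    (by intros; simp [Prod.fst_add, Prod.snd_add]; ring)
    (by intros; simp [Prod.smul_fst, Prod.smul_snd, smul_eq_mul]; ring)

def bminusL (F : Type*) [Field F] : (F × F) →ₗ[F] (F × F) →ₗ[F] F :=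
  LinearMap.mk₂ F (fun x y => x.1 * y.2 - x.2 * y.1)
    (by intros; simp [Prod.fst_add, Prod.snd_add]; ring)
    (by intros; simp [Prod.smul_fst, Prod.smul_snd, smul_eq_mul]; ring)
    (by intros; simp [Prod.fst_add, Prod.snd_add]; ring)
    (by intros; simp [Prod.smul_fst, Prod.smul_snd, smul_eq_mul]; ring)

/-- The constraint `⟨f(v),(1,0)⟩_K = 0` for all `v ∈ X`, used for deletion. -/
def delC (β : (F × F) →ₗ[F] (F × F) →ₗ[F] F) (X : Finset V) :
    Submodule F (V → F × F) :=
  ⨅ v ∈ X, LinearMap.ker ((β.flip (1, 0)).comp (LinearMap.proj v))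

/-- The constraint `⟨f(v),(0,1)⟩_K = 0` for all `v ∈ X`, used for contraction. -/
def conC (β : (F × F) →ₗ[F] (F × F) →ₗ[F] F) (X : Finset V) :
    Submodule F (V → F × F) :=
  ⨅ v ∈ X, LinearMap.ker ((β.flip (0, 1)).comp (LinearMap.proj v))

/-- The minor `N/X∖Y` of a chain-group `N`, obtained by contracting `X` and
deleting `Y`, on the ground set `V∖(X∪Y)`. -/
def minorCG (β : (F × F) →ₗ[F] (F × F) →ₗ[F] F) (N : Submodule F (V → F × F))
    (X Y : Finset V) : Submodule F ({x // x ∈ (X ∪ Y)ᶜ} → F × F) :=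
  (N ⊓ conC β X ⊓ delC β Y).map (res F (F × F) (X ∪ Y)ᶜ)

/-! A minor is a linear reduction of `N` along a totally isotropic space. Let `L` be the space of
chains supported on `X ∪ Y` whose values are multiples of `(0, 1)` on `X` and of `(1, 0)` on `Y`.
The constraints defining `N/X∖Y` say that a chain is orthogonal to `L`, and a chain of `Lᗮ` that
restricts to zero on `V∖(X ∪ Y)` lies in `L`. So `N/X∖Y` is the image of `N ∩ Lᗮ` under a map whose
kernel `P` is contained in `N ∩ L`. As `N` is orthogonal to `P`, the pairing of `N` with `L` has
rank at most `dim L - dim P`, whence `dim N - dim (N ∩ Lᗮ) ≤ |X| + |Y| - dim P`. -/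

open Module LinearMap

section LinearAlgebra

variable {E E' : Type*} [AddCommGroup E] [Module F E] [AddCommGroup E'] [Module F E']

theorem finrank_map_add_finrank_inf_ker (f : E →ₗ[F] E') (N : Submodule F E)
    [FiniteDimensional F N] : finrank F (N.map f) + finrank F ↥(N ⊓ ker f) = finrank F N := by
  rw [← finrank_range_add_finrank_ker (f.domRestrict N), range_domRestrict, ker_domRestrict,
    ← Submodule.finrank_map_subtype_eq N, Submodule.map_comap_subtype]

theorem finrank_add_finrank_le_add_finrank_inf_orthogonalBilin (B : E →ₗ[F] E' →ₗ[F] F)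
    {N : Submodule F E} {P L : Submodule F E'} [FiniteDimensional F N] [FiniteDimensional F L]
    (hPL : P ≤ L) (hNP : N ≤ P.orthogonalBilin B.flip) :
    finrank F N + finrank F P ≤ finrank F L + finrank F ↥(N ⊓ L.orthogonalBilin B.flip) := by
  let φ : E →ₗ[F] Dual F L := L.subtype.dualMap ∘ₗ B
  have ker_φ : ker φ = L.orthogonalBilin B.flip := by
    ext u
    simp [φ, LinearMap.ext_iff]
  have map_φ_le : N.map φ ≤ (P.submoduleOf L).dualAnnihilator := by
    rintro _ ⟨u, hu, rfl⟩
    exact (Submodule.mem_dualAnnihilator _).mpr fun w hw => hNP hu w hw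
  have rank_φ := finrank_map_add_finrank_inf_ker φ N
  have rank_le := Submodule.finrank_mono map_φ_le
  have rank_annihilator := Subspace.finrank_add_finrank_dualAnnihilator_eq (P.submoduleOf L)
  rw [ker_φ] at rank_φ
  rw [(Submodule.submoduleOfEquivOfLe hPL).finrank_eq] at rank_annihilator
  omega

theorem two_mul_finrank_le_of_le_orthogonalBilin [FiniteDimensional F E] {B : E →ₗ[F] E →ₗ[F] F}
    (hB : B.Nondegenerate) {N : Submodule F E} (hN : N ≤ N.orthogonalBilin B) :
    2 * finrank F N ≤ finrank F E := by
  have h_orthogonal : finrank F (N.orthogonalBilin B) = finrank F E - finrank F N :=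
    LinearMap.BilinForm.finrank_orthogonal hB N
  have h_le := Submodule.finrank_mono hN
  have h_ambient := N.finrank_le
  omega

theorem ker_flip_eq_span_singleton {β : E →ₗ[F] E →ₗ[F] F} (hβ : β.SeparatingRight)
    (hE : finrank F E = 2) {e : E} (he : e ≠ 0) (hee : β e e = 0) :
    ker (β.flip e) = Submodule.span F {e} := by
  have : FiniteDimensional F E := .of_finrank_pos (by omega)
  have h_ne : β.flip e ≠ 0 := fun h => he (hβ e fun a => LinearMap.congr_fun h a)
  have h_ker := Dual.finrank_ker_add_one_of_ne_zero h_ne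
  refine (Submodule.eq_of_le_of_finrank_eq ?_ ?_).symm
  · simpa using hee
  · rw [finrank_span_singleton he]
    omega

theorem apply_eq_zero_of_apply_isotropic_eq_zero {β : E →ₗ[F] E →ₗ[F] F}
    (hβ : β.SeparatingRight) (hE : finrank F E = 2) {e : E} (he : e ≠ 0) (hee : β e e = 0)
    {a b : E} (ha : β a e = 0) (hb : β b e = 0) : β a b = 0 := by
  obtain ⟨c, rfl⟩ := Submodule.mem_span_singleton.mp
    ((ker_flip_eq_span_singleton hβ hE he hee).le hb)
  rw [map_smul, ha, smul_zero]

end LinearAlgebra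

section ChainForm

variable {ι K : Type*} [AddCommGroup K] [Module F K]

/-- The bilinear form `⟨f, g⟩ = ∑ v, ⟨f v, g v⟩_K` on chains, for which chain-groups are called
isotropic or Lagrangian; `β` is the form on `K`. -/
def chainForm [Fintype ι] (β : K →ₗ[F] K →ₗ[F] F) : (ι → K) →ₗ[F] (ι → K) →ₗ[F] F :=
  ∑ v, β.compl₁₂ (proj v) (proj v)

theorem chainForm_apply [Fintype ι] (β : K →ₗ[F] K →ₗ[F] F) (f g : ι → K) :
    chainForm β f g = ∑ v, β (f v) (g v) := by
  simp [chainForm]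

theorem chainForm_single_left [Fintype ι] [DecidableEq ι] (β : K →ₗ[F] K →ₗ[F] F) (v : ι)
    (a : K) (g : ι → K) :
    chainForm β (Pi.single v a) g = β a (g v) := by
  rw [chainForm_apply, Fintype.sum_eq_single v fun w hw => by simp [hw], Pi.single_eq_same]

theorem chainForm_single_right [Fintype ι] [DecidableEq ι] (β : K →ₗ[F] K →ₗ[F] F)
    (f : ι → K) (v : ι) (a : K) :
    chainForm β f (Pi.single v a) = β (f v) a := by
  rw [chainForm_apply, Fintype.sum_eq_single v fun w hw => by simp [hw], Pi.single_eq_same]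

theorem chainForm_nondegenerate [Fintype ι] {β : K →ₗ[F] K →ₗ[F] F} (hβ : β.Nondegenerate) :
    (chainForm (ι := ι) β).Nondegenerate := by
  classical
  refine ⟨fun f hf => funext fun v => hβ.1 _ fun a => ?_,
    fun g hg => funext fun v => hβ.2 _ fun a => ?_⟩
  · rw [← chainForm_single_right, hf]
  · rw [← chainForm_single_left, hg]

variable [DecidableEq ι]

/-- Chains supported on `S` all of whose values are multiples of `e`. -/
def singleChains (F : Type*) [Field F] {ι K : Type*} [DecidableEq ι] [AddCommGroup K] [Module F K]
    (e : K) (S : Finset ι) : Submodule F (ι → K) :=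
  Submodule.span F (Set.range fun v : S => Pi.single v.1 e)

theorem single_mem_singleChains {e a : K} {S : Finset ι} {v : ι} (hv : v ∈ S)
    (ha : a ∈ Submodule.span F {e}) : Pi.single v a ∈ singleChains F e S := by
  obtain ⟨c, rfl⟩ := Submodule.mem_span_singleton.mp ha
  rw [Pi.single_smul]
  exact Submodule.smul_mem _ c (Submodule.subset_span ⟨⟨v, hv⟩, rfl⟩)

instance (e : K) (S : Finset ι) : FiniteDimensional F (singleChains F e S) :=
  .span_of_finite F (Set.finite_range _)

theorem finrank_singleChains_le (e : K) (S : Finset ι) : finrank F (singleChains F e S) ≤ S.card :=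
  (finrank_range_le_card _).trans_eq (Fintype.card_coe S)

theorem singleChains_le_ker_chainForm_iff [Fintype ι] {β : K →ₗ[F] K →ₗ[F] F} {f : ι → K} {e : K}
    {S : Finset ι} : singleChains F e S ≤ ker (chainForm β f) ↔ ∀ v ∈ S, β (f v) e = 0 := by
  simp [singleChains, Submodule.span_le, Set.range_subset_iff, chainForm_single_right]

end ChainForm

section Minor

theorem mem_conC {ι : Type*} {β : (F × F) →ₗ[F] (F × F) →ₗ[F] F} {X : Finset ι} {f : ι → F × F} :
    f ∈ conC β X ↔ ∀ v ∈ X, β (f v) (0, 1) = 0 := by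
  simp [conC]

theorem mem_delC {ι : Type*} {β : (F × F) →ₗ[F] (F × F) →ₗ[F] F} {Y : Finset ι} {f : ι → F × F} :
    f ∈ delC β Y ↔ ∀ v ∈ Y, β (f v) (1, 0) = 0 := by
  simp [delC]

/-- Chains supported on `X ∪ Y` whose values are multiples of `(0, 1)` on `X` and of `(1, 0)` on
`Y`. For disjoint `X` and `Y` this is the totally isotropic space along which `N/X∖Y` reduces
`N`. -/
def minorChains (F : Type*) [Field F] {ι : Type*} [DecidableEq ι] (X Y : Finset ι) :
    Submodule F (ι → F × F) :=
  singleChains F (0, 1) X ⊔ singleChains F (1, 0) Y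

theorem finrank_minorChains_le {ι : Type*} [DecidableEq ι] (X Y : Finset ι) :
    finrank F (minorChains F X Y) ≤ X.card + Y.card :=
  (Submodule.finrank_add_le_finrank_add_finrank _ _).trans
    (add_le_add (finrank_singleChains_le _ X) (finrank_singleChains_le _ Y))

theorem orthogonalBilin_minorChains (β : (F × F) →ₗ[F] (F × F) →ₗ[F] F) (X Y : Finset V) :
    (minorChains F X Y).orthogonalBilin (chainForm β).flip = conC β X ⊓ delC β Y := by
  ext f
  change minorChains F X Y ≤ ker (chainForm β f) ↔ _
  rw [minorChains, sup_le_iff, singleChains_le_ker_chainForm_iff,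
    singleChains_le_ker_chainForm_iff, Submodule.mem_inf, mem_conC, mem_delC]

variable {β : (F × F) →ₗ[F] (F × F) →ₗ[F] F}

theorem conC_inf_delC_inf_ker_res_le_minorChains (hβ : β.SeparatingRight)
    (h₁₀ : β (1, 0) (1, 0) = 0) (h₀₁ : β (0, 1) (0, 1) = 0) (X Y : Finset V) :
    conC β X ⊓ delC β Y ⊓ ker (res F (F × F) (X ∪ Y)ᶜ) ≤ minorChains F X Y := by
  rintro f ⟨⟨hX, hY⟩, hf⟩
  rw [← Finset.univ_sum_single f]
  refine Submodule.sum_mem _ fun v _ => ?_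
  by_cases hvX : v ∈ X
  · have h_line := (ker_flip_eq_span_singleton hβ (by simp) (by simp) h₀₁).le (mem_conC.mp hX v hvX)
    exact Submodule.mem_sup_left (single_mem_singleChains hvX h_line)
  by_cases hvY : v ∈ Y
  · have h_line := (ker_flip_eq_span_singleton hβ (by simp) (by simp) h₁₀).le (mem_delC.mp hY v hvY)
    exact Submodule.mem_sup_right (single_mem_singleChains hvY h_line)
  · have h_zero : f v = 0 := congrFun hf ⟨v, by simp [hvX, hvY]⟩
    simp [h_zero]

theorem chainForm_res_res (hβ : β.SeparatingRight) (h₁₀ : β (1, 0) (1, 0) = 0)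
    (h₀₁ : β (0, 1) (0, 1) = 0) {X Y : Finset V} {f g : V → F × F}
    (hf : f ∈ conC β X ⊓ delC β Y) (hg : g ∈ conC β X ⊓ delC β Y) :
    chainForm β (res F (F × F) (X ∪ Y)ᶜ f) (res F (F × F) (X ∪ Y)ᶜ g) = chainForm β f g := by
  rw [chainForm_apply, chainForm_apply, ← Finset.sum_subset (Finset.subset_univ (X ∪ Y)ᶜ)]
  · exact Finset.sum_coe_sort (X ∪ Y)ᶜ fun v => β (f v) (g v)
  intro v _ hv
  rw [Finset.mem_compl, not_not, Finset.mem_union] at hv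
  rcases hv with hvX | hvY
  · exact apply_eq_zero_of_apply_isotropic_eq_zero hβ (by simp) (by simp) h₀₁
      (mem_conC.mp hf.1 v hvX) (mem_conC.mp hg.1 v hvX)
  · exact apply_eq_zero_of_apply_isotropic_eq_zero hβ (by simp) (by simp) h₁₀
      (mem_delC.mp hf.2 v hvY) (mem_delC.mp hg.2 v hvY)

theorem minorCG_le_orthogonalBilin (hβ : β.SeparatingRight) (h₁₀ : β (1, 0) (1, 0) = 0)
    (h₀₁ : β (0, 1) (0, 1) = 0) {N : Submodule F (V → F × F)}
    (hN : N ≤ N.orthogonalBilin (chainForm β)) (X Y : Finset V) :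
    minorCG β N X Y ≤ (minorCG β N X Y).orthogonalBilin (chainForm β) := by
  rintro _ ⟨g, ⟨⟨hgN, hgX⟩, hgY⟩, rfl⟩ _ ⟨f, ⟨⟨hfN, hfX⟩, hfY⟩, rfl⟩
  exact (chainForm_res_res hβ h₁₀ h₀₁ ⟨hfX, hfY⟩ ⟨hgX, hgY⟩).trans (hN hgN f hfN)

theorem finrank_le_add_finrank_minorCG (hβ : β.SeparatingRight) (h₁₀ : β (1, 0) (1, 0) = 0)
    (h₀₁ : β (0, 1) (0, 1) = 0) {N : Submodule F (V → F × F)}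
    (hN : N ≤ N.orthogonalBilin (chainForm β)) (X Y : Finset V) :
    finrank F N ≤ X.card + Y.card + finrank F (minorCG β N X Y) := by
  let P := N ⊓ conC β X ⊓ delC β Y ⊓ ker (res F (F × F) (X ∪ Y)ᶜ)
  have P_le_N : P ≤ N := inf_le_left.trans (inf_le_left.trans inf_le_left)
  have P_le_minorChains : P ≤ minorChains F X Y :=
    le_trans (inf_le_inf_right _ (inf_le_inf_right _ inf_le_right))
      (conC_inf_delC_inf_ker_res_le_minorChains hβ h₁₀ h₀₁ X Y)
  have N_orthogonal_P : N ≤ P.orthogonalBilin (chainForm β).flip :=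
    fun u hu w hw => hN (P_le_N hw) u hu
  have reduction := finrank_add_finrank_le_add_finrank_inf_orthogonalBilin (chainForm β)
    P_le_minorChains N_orthogonal_P
  rw [orthogonalBilin_minorChains, ← inf_assoc] at reduction
  have rank_nullity : finrank F (minorCG β N X Y) + finrank F P = _ :=
    finrank_map_add_finrank_inf_ker (res F (F × F) (X ∪ Y)ᶜ) (N ⊓ conC β X ⊓ delC β Y)
  have finrank_minorChains := finrank_minorChains_le (F := F) X Y
  omega

end Minor

theorem finrank_le_card_of_le_orthogonalBilin {ι : Type*} [Fintype ι]
    {β : (F × F) →ₗ[F] (F × F) →ₗ[F] F} (hβ : β.Nondegenerate) {N : Submodule F (ι → F × F)}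
    (hN : N ≤ N.orthogonalBilin (chainForm β)) : finrank F N ≤ Fintype.card ι := by
  have h_half := two_mul_finrank_le_of_le_orthogonalBilin (chainForm_nondegenerate hβ) hN
  have h_chains : finrank F (ι → F × F) = Fintype.card ι * 2 := by simp [finrank_pi_fintype]
  omega

theorem bplusL_nondegenerate : (bplusL F).Nondegenerate :=
  ⟨fun a ha => Prod.ext (by simpa [bplusL] using ha (0, 1)) (by simpa [bplusL] using ha (1, 0)),
    fun a ha => Prod.ext (by simpa [bplusL] using ha (0, 1)) (by simpa [bplusL] using ha (1, 0))⟩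

theorem bminusL_nondegenerate : (bminusL F).Nondegenerate :=
  ⟨fun a ha => Prod.ext (by simpa [bminusL] using ha (0, 1)) (by simpa [bminusL] using ha (1, 0)),
    fun a ha => Prod.ext (by simpa [bminusL] using ha (0, 1)) (by simpa [bminusL] using ha (1, 0))⟩

theorem minor_corank_le_general {β : (F × F) →ₗ[F] (F × F) →ₗ[F] F} (hβ : β.Nondegenerate)
    (h₁₀ : β (1, 0) (1, 0) = 0) (h₀₁ : β (0, 1) (0, 1) = 0) {N : Submodule F (V → F × F)}
    (hiso : ∀ u ∈ N, ∀ w ∈ N, ∑ x, β (u x) (w x) = 0) {X Y : Finset V} (hdisj : Disjoint X Y) :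
    ((X ∪ Y)ᶜ.card + finrank F N ≤ Fintype.card V + finrank F (minorCG β N X Y)) ∧
    (finrank F N = Fintype.card V →
      (∀ u ∈ minorCG β N X Y, ∀ w ∈ minorCG β N X Y, ∑ x, β (u x) (w x) = 0) ∧
        finrank F (minorCG β N X Y) = (X ∪ Y)ᶜ.card) := by
  have hN : N ≤ N.orthogonalBilin (chainForm β) :=
    fun w hw u hu => (chainForm_apply β u w).trans (hiso u hu w hw)
  have minor_isotropic := minorCG_le_orthogonalBilin hβ.2 h₁₀ h₀₁ hN X Y
  have minor_lower := finrank_le_add_finrank_minorCG hβ.2 h₁₀ h₀₁ hN X Y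
  have minor_upper := finrank_le_card_of_le_orthogonalBilin hβ minor_isotropic
  have h_card := Finset.card_add_card_compl (X ∪ Y)
  rw [Finset.card_union_of_disjoint hdisj] at h_card
  rw [Fintype.card_coe] at minor_upper
  refine ⟨by omega, fun _ => ⟨fun u hu w hw => ?_, by omega⟩⟩
  exact (chainForm_apply β u w).symm.trans (minor_isotropic hw u hu)

/-- For a totally isotropic chain-group `N` on `V` and a minor `M = N/X∖Y` of
`N` on `V' = V∖(X∪Y)`, one has `|V'| − dim M ≤ |V| − dim N`.  Consequently,
every minor of a Lagrangian chain-group is Lagrangian. -/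
theorem minor_corank_le (β : (F × F) →ₗ[F] (F × F) →ₗ[F] F)
    (hβ : β = bplusL F ∨ β = bminusL F)
    (N : Submodule F (V → F × F))
    (hiso : ∀ u ∈ N, ∀ w ∈ N, ∑ x, β (u x) (w x) = 0)
    (X Y : Finset V) (hdisj : Disjoint X Y) :
    ((X ∪ Y)ᶜ.card + Module.finrank F N
        ≤ Fintype.card V + Module.finrank F (minorCG β N X Y)) ∧
    (Module.finrank F N = Fintype.card V →
      (∀ u ∈ minorCG β N X Y, ∀ w ∈ minorCG β N X Y,
          ∑ x, β (u x) (w x) = 0) ∧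
        Module.finrank F (minorCG β N X Y) = (X ∪ Y)ᶜ.card) := by
  rcases hβ with rfl | rfl
  · exact minor_corank_le_general bplusL_nondegenerate (by simp [bplusL]) (by simp [bplusL])
      hiso hdisj
  · exact minor_corank_le_general bminusL_nondegenerate (by simp [bminusL]) (by simp [bminusL])
      hiso hdisj
end
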